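/- Let φ₁, φ₂ ∈ (0, π) and Z₁, Z₂ ∈ ℂ, and set a₁₂ = sin²((φ₂ − φ₁)/2)/sin²((φ₂ + φ₁)/2). Let G be the 2×2 complex matrix with entries g_{ij} = (δ_{ij} + e^{Z_i + Z_j})/(e^{−iφ_i} − e^{iφ_j}) and H the 2×2 matrix with entries h_{ij} = (δ_{ij} + e^{(Z_i − iφ_i) + (Z_j − iφ_j)})/(e^{−iφ_i} − e^{iφ_j}) (all denominators are nonzero under the stated hypotheses). Then (−4 sin φ₁ sin φ₂)·det G = 1 + e^{2Z₁} + e^{2Z₂} + a₁₂ e^{2(Z₁ + Z₂)} and (−4 sin φ₁ sin φ₂)·det H = 1 + e^{2(Z₁ − iφ₁)} + e^{2(Z₂ − iφ₂)} + a₁₂ e^{2(Z₁ + Z₂ − iφ₁ − iφ₂)}. -/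

import Mathlib

open Complex

/-!
Dividing the two terms of a `2 × 2` determinant with entries `(δᵢⱼ + xᵢ yⱼ) / (pᵢ - qⱼ)` by the
product of the diagonal Cauchy factors leaves one interaction coefficient, the cross ratio
`(p₁ - p₂) (q₂ - q₁) / ((p₁ - q₂) (p₂ - q₁))`. On the curve `pᵢ = e^{-iφᵢ}`, `qᵢ = e^{iφᵢ}` its
numerator and denominator are both of the form
`(e^{-ia} - e^{-ib}) (e^{ib} - e^{ia}) = -4 sin² ((b - a) / 2)`, so it equals `a₁₂`.
-/

/-- The matrix of the dark-soliton solution with parameters `φ` and phases `W`: the `G` of the paper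
is the case `W = Z`, its `H` the case `W = Z - iφ`. -/
noncomputable def darkSolitonMatrix {ι : Type*} [DecidableEq ι] (φ W : ι → ℂ) : Matrix ι ι ℂ :=
  Matrix.of fun i j =>
    ((if i = j then 1 else 0) + exp (W i + W j)) / (exp (-I * φ i) - exp (I * φ j))

lemma mul_det_fin_two_one_add_vecMulVec_div_sub {K : Type*} [Field K] {p q : Fin 2 → K}
    (hpq : ∀ i j, p i - q j ≠ 0) (x y : Fin 2 → K) :
    (p 0 - q 0) * (p 1 - q 1) *
        (Matrix.of fun i j => ((if i = j then 1 else 0) + x i * y j) / (p i - q j)).det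
      = 1 + x 0 * y 0 + x 1 * y 1
        + (p 0 - p 1) * (q 1 - q 0) / ((p 0 - q 1) * (p 1 - q 0)) * (x 0 * y 0 * (x 1 * y 1)) := by
  have h₀₀ := hpq 0 0
  have h₀₁ := hpq 0 1
  have h₁₀ := hpq 1 0
  have h₁₁ := hpq 1 1
  simp only [Matrix.det_fin_two, Matrix.of_apply, if_true, zero_ne_one, one_ne_zero, if_false,
    zero_add]
  field_simp
  ring

lemma exp_neg_I_mul_sub_exp_I_mul (z : ℂ) : exp (-I * z) - exp (I * z) = -2 * I * sin z := by
  have htwo_sin : 2 * sin z = (exp (-I * z) - exp (I * z)) * I := by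
    rw [two_sin, neg_mul, neg_mul, mul_comm z]
  linear_combination I * htwo_sin + (exp (-I * z) - exp (I * z)) * I_sq

lemma exp_neg_I_mul_sub_mul_exp_I_mul_sub (a b : ℂ) :
    (exp (-I * a) - exp (-I * b)) * (exp (I * b) - exp (I * a)) = -4 * sin ((b - a) / 2) ^ 2 := by
  have hcancel (z : ℂ) : exp (-I * z) * exp (I * z) = 1 := by
    rw [neg_mul, ← exp_add, neg_add_cancel, exp_zero]
  calc (exp (-I * a) - exp (-I * b)) * (exp (I * b) - exp (I * a))
      = exp ((b - a) * I) + exp (-(b - a) * I) - 2 := by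
        rw [sub_mul, mul_sub, mul_sub, hcancel, hcancel, ← exp_add, ← exp_add]
        ring_nf
    _ = 2 * cos (2 * ((b - a) / 2)) - 2 := by
        rw [← two_cos, mul_div_cancel₀ _ two_ne_zero]
    _ = -4 * sin ((b - a) / 2) ^ 2 := by
        rw [cos_two_mul_eq_one_sub]
        ring

lemma exp_neg_I_mul_sub_exp_I_mul_mul_swap (a b : ℂ) :
    (exp (-I * a) - exp (I * b)) * (exp (-I * b) - exp (I * a)) = -4 * sin ((b + a) / 2) ^ 2 := by
  have h := exp_neg_I_mul_sub_mul_exp_I_mul_sub a (-b)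
  rwa [neg_mul_neg, mul_neg, ← neg_mul, ← neg_add', neg_div, sin_neg, neg_sq] at h

lemma exp_neg_I_mul_sub_exp_I_mul_ne_zero {a b : ℂ} (h : sin ((b + a) / 2) ≠ 0) :
    exp (-I * a) - exp (I * b) ≠ 0 := by
  refine left_ne_zero_of_mul (b := exp (-I * b) - exp (I * a)) ?_
  rw [exp_neg_I_mul_sub_exp_I_mul_mul_swap]
  exact mul_ne_zero (by norm_num) (pow_ne_zero 2 h)

lemma crossRatio_exp_I_mul (a b : ℂ) :
    (exp (-I * a) - exp (-I * b)) * (exp (I * b) - exp (I * a))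
        / ((exp (-I * a) - exp (I * b)) * (exp (-I * b) - exp (I * a)))
      = sin ((b - a) / 2) ^ 2 / sin ((b + a) / 2) ^ 2 := by
  rw [exp_neg_I_mul_sub_mul_exp_I_mul_sub, exp_neg_I_mul_sub_exp_I_mul_mul_swap,
    mul_div_mul_left _ _ (by norm_num)]

lemma sin_half_add_ne_zero {a b : ℝ} (ha : a ∈ Set.Ioo 0 Real.pi) (hb : b ∈ Set.Ioo 0 Real.pi) :
    sin (((a : ℂ) + b) / 2) ≠ 0 := by
  have hpos : 0 < Real.sin ((a + b) / 2) :=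
    Real.sin_pos_of_pos_of_lt_pi (by linarith [ha.1, hb.1]) (by linarith [ha.2, hb.2])
  exact_mod_cast hpos.ne'

theorem stmt12_general {φ : Fin 2 → ℂ} (hφ : ∀ i j, sin ((φ j + φ i) / 2) ≠ 0) (W : Fin 2 → ℂ) :
    -4 * sin (φ 0) * sin (φ 1) * (darkSolitonMatrix φ W).det
      = 1 + exp (2 * W 0) + exp (2 * W 1)
        + sin ((φ 1 - φ 0) / 2) ^ 2 / sin ((φ 1 + φ 0) / 2) ^ 2 * exp (2 * (W 0 + W 1)) := by
  have hdiag : -4 * sin (φ 0) * sin (φ 1)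
      = (exp (-I * φ 0) - exp (I * φ 0)) * (exp (-I * φ 1) - exp (I * φ 1)) := by
    rw [exp_neg_I_mul_sub_exp_I_mul, exp_neg_I_mul_sub_exp_I_mul]
    linear_combination -4 * sin (φ 0) * sin (φ 1) * I_sq
  have hdet := mul_det_fin_two_one_add_vecMulVec_div_sub
    (fun i j => exp_neg_I_mul_sub_exp_I_mul_ne_zero (hφ i j)) (fun i => exp (W i))
    (fun i => exp (W i))
  rw [crossRatio_exp_I_mul, ← hdiag] at hdet
  simpa only [darkSolitonMatrix, mul_add, two_mul, exp_add, mul_mul_mul_comm] using hdet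

/-- Factorization of the 2×2 tau determinants of the two-dark-soliton solution:
with `g_{ij} = (δ_{ij} + e^{Z_i+Z_j})/(e^{−iφ_i} − e^{iφ_j})` and
`h_{ij} = (δ_{ij} + e^{(Z_i−iφ_i)+(Z_j−iφ_j)})/(e^{−iφ_i} − e^{iφ_j})`, one has
`(−4 sin φ₁ sin φ₂) det G = 1 + e^{2Z₁} + e^{2Z₂} + a₁₂ e^{2(Z₁+Z₂)}` and likewise for `H`,
where `a₁₂ = sin²((φ₂−φ₁)/2)/sin²((φ₂+φ₁)/2)`. -/
theorem stmt12 (φ₁ φ₂ : ℝ) (hφ₁ : φ₁ ∈ Set.Ioo 0 Real.pi) (hφ₂ : φ₂ ∈ Set.Ioo 0 Real.pi)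
    (Z₁ Z₂ : ℂ) :
    let φ : Fin 2 → ℝ := ![φ₁, φ₂]
    let Z : Fin 2 → ℂ := ![Z₁, Z₂]
    let a₁₂ : ℝ := Real.sin ((φ₂ - φ₁) / 2) ^ 2 / Real.sin ((φ₂ + φ₁) / 2) ^ 2
    let G : Matrix (Fin 2) (Fin 2) ℂ := Matrix.of fun i j =>
      ((if i = j then 1 else 0) + Complex.exp (Z i + Z j))
        / (Complex.exp (-Complex.I * ((φ i : ℝ) : ℂ)) - Complex.exp (Complex.I * ((φ j : ℝ) : ℂ)))
    let H : Matrix (Fin 2) (Fin 2) ℂ := Matrix.of fun i j =>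
      ((if i = j then 1 else 0)
          + Complex.exp ((Z i - Complex.I * ((φ i : ℝ) : ℂ)) + (Z j - Complex.I * ((φ j : ℝ) : ℂ))))
        / (Complex.exp (-Complex.I * ((φ i : ℝ) : ℂ)) - Complex.exp (Complex.I * ((φ j : ℝ) : ℂ)))
    (((-4 * Real.sin φ₁ * Real.sin φ₂ : ℝ) : ℂ) * G.det
        = 1 + Complex.exp (2 * Z₁) + Complex.exp (2 * Z₂)
          + ((a₁₂ : ℝ) : ℂ) * Complex.exp (2 * (Z₁ + Z₂))) ∧
      (((-4 * Real.sin φ₁ * Real.sin φ₂ : ℝ) : ℂ) * H.det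
        = 1 + Complex.exp (2 * (Z₁ - Complex.I * ((φ₁ : ℝ) : ℂ)))
          + Complex.exp (2 * (Z₂ - Complex.I * ((φ₂ : ℝ) : ℂ)))
          + ((a₁₂ : ℝ) : ℂ)
              * Complex.exp (2 * (Z₁ + Z₂ - Complex.I * ((φ₁ : ℝ) : ℂ) - Complex.I * ((φ₂ : ℝ) : ℂ)))) := by
  intro φ Z a₁₂ G H
  have hφ : ∀ i, φ i ∈ Set.Ioo 0 Real.pi := Fin.forall_fin_two.2 ⟨hφ₁, hφ₂⟩
  have tau := stmt12_general fun i j => sin_half_add_ne_zero (hφ j) (hφ i)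
  push_cast [a₁₂]
  rw [sub_sub, add_sub_add_comm]
  exact ⟨tau Z, tau fun i => Z i - I * φ i⟩
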